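/- Let G be a parity game, let P be one of the two players, and let D ⊆ V be a non-empty P-dominion in G. If the highest priority h occurring on the vertices of D is not of P's parity (i.e. h is odd if P is Even, and h is even if P is Odd), then D contains a non-empty P-dominion D' ⊆ D in which no vertex has priority h. -/

import Mathlib

/-!
Fix a strategy `σ` that wins for `P` from some vertex of `D` within `D`, and consider the tree of
finite histories agreeing with `σ`. If every such history had a proper extension ending at
priority `h`, then iterating these extensions would give a play agreeing with `σ` that stays in `D`
and sees `h` infinitely often; since `h` is the maximum on `D`, `P` would lose it
(`exists_play_infOften`). So some history `s₀` has no proper extension ending at priority `h`.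
The endpoints of the proper extensions of `s₀` form the dominion `D'`. Each `P`-vertex of
`D'` has a successor in `D'`, namely the one chosen by `σ`; the opponent cannot leave `D'`; and `P`
wins from each vertex of `D'` by continuing to play `σ`
with a suitable finite history prepended: a play of this kind is a tail of a play
agreeing with `σ` (`contWins_of_reachable`), and the winner of a play depends only on its tails.

The argument uses neither positional strategies nor determinacy.
-/

/-- The two players of a parity game. -/
inductive Player where
  | even : Player
  | odd : Player
deriving DecidableEq

/-- The opponent of a player. -/
def Player.opp : Player → Player
  | even => odd
  | odd => even

/-- A natural number has the parity of the given player. -/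
def Player.matchesPriority : Player → ℕ → Prop
  | even => fun p => Even p
  | odd => fun p => Odd p

/-- A parity game on a vertex type `V`: an ownership function, an edge relation in which
every vertex has at least one successor, and a priority function. -/
structure ParityGame (V : Type*) where
  owner : V → Player
  edge : V → V → Prop
  priority : V → ℕ
  succ_nonempty : ∀ v, ∃ w, edge v w

namespace ParityGame

variable {V : Type*} (G : ParityGame V)

/-- A play is an infinite sequence of vertices following edges. -/
def IsPlay (π : ℕ → V) : Prop := ∀ i, G.edge (π i) (π (i + 1))

/-- Priority `p` occurs infinitely often along the play `π`. -/
def InfOften (π : ℕ → V) (p : ℕ) : Prop := ∀ N, ∃ i, N ≤ i ∧ G.priority (π i) = p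

/-- A play is winning for a player if the highest priority occurring infinitely often
along it has that player's parity. -/
def WinsPlay (P : Player) (π : ℕ → V) : Prop :=
  ∃ p, G.InfOften π p ∧ (∀ q, G.InfOften π q → q ≤ p) ∧ P.matchesPriority p

/-- A play `π` agrees with the strategy `σ` of player `P` (a strategy maps a history
together with the current vertex to the next vertex). -/
def Agrees (P : Player) (σ : List V → V → V) (π : ℕ → V) : Prop :=
  ∀ i, G.owner (π i) = P → π (i + 1) = σ (List.ofFn fun j : Fin i => π j) (π i)

/-- `σ` is a valid strategy for player `P`: at `P`'s vertices it prescribes a successor. -/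
def ValidFor (P : Player) (σ : List V → V → V) : Prop :=
  ∀ hist v, G.owner v = P → G.edge v (σ hist v)

/-- Player `P` has a winning strategy from vertex `v`. -/
def WinsFrom (P : Player) (v : V) : Prop :=
  ∃ σ, G.ValidFor P σ ∧ ∀ π, π 0 = v → G.IsPlay π → G.Agrees P σ π → G.WinsPlay P π

/-- The winning region of player `P`. -/
def winningRegion (P : Player) : Set V := {v | G.WinsFrom P v}

/-- Player `P` has a winning strategy from `v` in the subgame induced by the set `D`:
a strategy that at `P`'s vertices of `D` prescribes successors inside `D` and wins
every play that starts at `v`, stays in `D` and agrees with it. -/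
def WinsWithinFrom (P : Player) (D : Set V) (v : V) : Prop :=
  ∃ σ : List V → V → V,
    (∀ hist w, w ∈ D → G.owner w = P → σ hist w ∈ D ∧ G.edge w (σ hist w)) ∧
    ∀ π, π 0 = v → G.IsPlay π → (∀ i, π i ∈ D) → G.Agrees P σ π → G.WinsPlay P π

/-- `D` is a dominion for player `P` in the subgame of `G` induced by the vertex set `U`:
`D ⊆ U`, every `P`-vertex of `D` has a successor in `D`, every opponent vertex of `D`
has all of its successors (within the subgame) in `D`, and `P` wins from every vertex
of `D` in the subgame induced by `D`. -/
def IsDominionIn (P : Player) (U D : Set V) : Prop :=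
  D ⊆ U ∧
  (∀ v ∈ D, G.owner v = P → ∃ w ∈ D, G.edge v w) ∧
  (∀ v ∈ D, G.owner v ≠ P → ∀ w ∈ U, G.edge v w → w ∈ D) ∧
  ∀ v ∈ D, G.WinsWithinFrom P D v

/-- `D` is a dominion for player `P` in `G`. -/
def IsDominion (P : Player) (D : Set V) : Prop := G.IsDominionIn P Set.univ D

/-- The attractor for player `P` of the set `X`, computed in the subgame of `G` induced
by the vertex set `U`: the least set containing `X` such that a `P`-vertex with some
successor in it belongs to it, and an opponent vertex all of whose successors (within
the subgame) are in it belongs to it. -/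
inductive AttrIn (P : Player) (U X : Set V) : V → Prop
  | base {v} : v ∈ X → AttrIn P U X v
  | player {v w} : v ∈ U → G.owner v = P → w ∈ U → G.edge v w → AttrIn P U X w →
      AttrIn P U X v
  | opponent {v} : v ∈ U → G.owner v ≠ P → (∀ w ∈ U, G.edge v w → AttrIn P U X w) →
      AttrIn P U X v

/-- The attractor, within subgame `U`, as a set. -/
def attrIn (P : Player) (U X : Set V) : Set V := {v | G.AttrIn P U X v}

/-- The attractor `Attr_P(X, G)` for player `P` of the set `X` in the whole game `G`. -/
def attractor (P : Player) (X : Set V) : Set V := G.attrIn P Set.univ X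

/-- `T` is a trap for player `P`: every `P`-vertex of `T` has all of its successors in
`T`, and every opponent vertex of `T` has at least one successor in `T`. -/
def IsTrap (P : Player) (T : Set V) : Prop :=
  (∀ v ∈ T, G.owner v = P → ∀ w, G.edge v w → w ∈ T) ∧
  (∀ v ∈ T, G.owner v ≠ P → ∃ w ∈ T, G.edge v w)

end ParityGame

/-! ### Continuations of finite histories -/

namespace ParityGame

variable {V : Type*} (G : ParityGame V)

/-- One move of a play agreeing with `σ`. A state `(l, v)` is a finite history: `l` lists the
vertices already left, in chronological order, and `v` is the current vertex. -/
def HStep (P : Player) (σ : List V → V → V) (s t : List V × V) : Prop :=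
  t.1 = s.1 ++ [s.2] ∧ G.edge s.2 t.2 ∧ (G.owner s.2 = P → t.2 = σ s.1 s.2)

/-- Every play inside `D` that continues the finite history `s` in agreement with `σ` is won
by `P`. The play `π` starts at the current vertex of `s`. -/
def ContWins (P : Player) (D : Set V) (σ : List V → V → V) (s : List V × V) : Prop :=
  ∀ π : ℕ → V, π 0 = s.2 → G.IsPlay π → (∀ i, π i ∈ D) →
    (∀ i, G.owner (π i) = P → π (i + 1) = σ (s.1 ++ List.ofFn fun j : Fin i => π j) (π i)) →
    G.WinsPlay P π

variable {G}

lemma infOften_tail (π : ℕ → V) (p : ℕ) :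
    G.InfOften (fun i => π (i + 1)) p ↔ G.InfOften π p := by
  constructor
  · intro H N
    obtain ⟨i, hi, hp⟩ := H N
    exact ⟨i + 1, by omega, hp⟩
  · intro H N
    obtain ⟨i, hi, hp⟩ := H (N + 1)
    obtain ⟨j, rfl⟩ : ∃ j, i = j + 1 := ⟨i - 1, by omega⟩
    exact ⟨j, by omega, hp⟩

lemma winsPlay_tail (P : Player) (π : ℕ → V) :
    G.WinsPlay P (fun i => π (i + 1)) ↔ G.WinsPlay P π := by
  simp only [WinsPlay, infOften_tail]

lemma ContWins.step {P : Player} {D : Set V} {σ : List V → V → V} {s t : List V × V}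
    (hs : G.ContWins P D σ s) (hsD : s.2 ∈ D) (hst : G.HStep P σ s t) :
    G.ContWins P D σ t := by
  intro π h0 hplay hD hag
  obtain ⟨hl, he, hσ⟩ := hst
  -- Prepend the vertex left by the move; the extended play continues `s`.
  let ρ : ℕ → V := fun i => Nat.casesOn i s.2 π
  have key : G.WinsPlay P ρ := by
    refine hs ρ rfl ?_ ?_ ?_
    · rintro (_ | i)
      · change G.edge s.2 (π 0)
        rw [h0]; exact he
      · exact hplay i
    · rintro (_ | i)
      · exact hsD
      · exact hD i
    · rintro (_ | i) ho
      · change π 0 = _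
        rw [h0, hσ ho]
        simp [ρ]
      · change π (i + 1) = _
        rw [hag i ho, hl]
        simp [ρ, List.ofFn_succ]
  exact (winsPlay_tail P ρ).2 key

lemma contWins_of_reachable {P : Player} {D : Set V} {σ : List V → V → V} {s t : List V × V}
    (hstepD : ∀ s t, s.2 ∈ D → G.HStep P σ s t → t.2 ∈ D)
    (hs : G.ContWins P D σ s) (hsD : s.2 ∈ D) (hst : Relation.ReflTransGen (G.HStep P σ) s t) :
    t.2 ∈ D ∧ G.ContWins P D σ t := by
  induction hst with
  | refl => exact ⟨hsD, hs⟩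
  | tail _ h ih => exact ⟨hstepD _ _ ih.1 h, ih.2.step ih.1 h⟩

/-! ### Paths visiting a set infinitely often -/

/-- If `H` can be reached again, by at least one step, from every state reachable from `s₀`, then
some infinite path from `s₀` visits `H` infinitely often: always move along a shortest path
to `H`. -/
lemma exists_path_infOften {S : Type*} (r : S → S → Prop) (H : S → Prop) (s₀ : S)
    (hH : ∀ s, Relation.ReflTransGen r s₀ s → ∃ t, Relation.TransGen r s t ∧ H t) :
    ∃ f : ℕ → S, f 0 = s₀ ∧ (∀ i, r (f i) (f (i + 1))) ∧ ∀ N, ∃ i, N ≤ i ∧ H (f i) := by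
  classical
  -- `R n s`: some path of exactly `n` moves leads from `s` into `H`.
  let R : ℕ → S → Prop := fun n => Nat.rec H (fun _ Q s => ∃ t, r s t ∧ Q t) n
  have hR : ∀ s, Relation.ReflTransGen r s₀ s → ∃ n, R (n + 1) s := by
    intro s hs
    obtain ⟨t, hst, ht⟩ := hH s hs
    clear hs
    induction hst using Relation.TransGen.head_induction_on with
    | single h => exact ⟨0, _, h, ht⟩
    | head h _ ih =>
      obtain ⟨n, hn⟩ := ih
      exact ⟨n + 1, _, h, hn⟩
  let X := {s // Relation.ReflTransGen r s₀ s}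
  have hnext : ∀ x : X, ∃ y : X, r x.1 y.1 ∧ R (Nat.find (hR x.1 x.2)) y.1 := by
    intro x
    obtain ⟨t, ht, hRt⟩ := Nat.find_spec (hR x.1 x.2)
    exact ⟨⟨t, x.2.tail ht⟩, ht, hRt⟩
  choose next hr hnx using hnext
  let f : ℕ → X := fun n => Nat.rec ⟨s₀, .refl⟩ (fun _ x => next x) n
  have hvisit : ∀ n k, R (n + 1) (f k).1 → ∃ m, k < m ∧ H (f m).1 := by
    intro n
    induction n using Nat.strong_induction_on with
    | _ n ih =>
      intro k hk
      have h1 := hnx (f k)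
      have hle : Nat.find (hR (f k).1 (f k).2) ≤ n := Nat.find_min' _ hk
      rcases hd : Nat.find (hR (f k).1 (f k).2) with _ | d
      · rw [hd] at h1
        exact ⟨k + 1, by omega, h1⟩
      · rw [hd] at h1
        obtain ⟨m, hm, hHm⟩ := ih d (by omega) (k + 1) h1
        exact ⟨m, by omega, hHm⟩
  refine ⟨fun n => (f n).1, rfl, fun i => hr (f i), fun N => ?_⟩
  obtain ⟨n, hn⟩ := hR (f N).1 (f N).2
  obtain ⟨m, hm, hHm⟩ := hvisit n N hn
  exact ⟨m, hm.le, hHm⟩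

lemma exists_play_infOften {P : Player} {σ : List V → V → V} {v : V} {h : ℕ}
    (hH : ∀ s, Relation.ReflTransGen (G.HStep P σ) ([], v) s →
      ∃ t, Relation.TransGen (G.HStep P σ) s t ∧ G.priority t.2 = h) :
    ∃ π, π 0 = v ∧ G.IsPlay π ∧ G.Agrees P σ π ∧ G.InfOften π h := by
  obtain ⟨f, h0, hf, hinf⟩ :=
    exists_path_infOften (G.HStep P σ) (fun s => G.priority s.2 = h) ([], v) hH
  have hhist : ∀ i, (f i).1 = List.ofFn fun j : Fin i => (f j).2 := by
    intro i
    induction i with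
    | zero => simp [h0]
    | succ i ih => rw [(hf i).1, ih, List.ofFn_succ', List.concat_eq_append]; simp
  refine ⟨fun i => (f i).2, by simp [h0], fun i => (hf i).2.1, fun i ho => ?_, hinf⟩
  rw [← hhist i]
  exact (hf i).2.2 ho

end ParityGame

/-! ### The sub-dominion -/

/-- If the highest priority `h` occurring in a non-empty dominion `D`
for player `P` is not of `P`'s parity, then `D` contains a non-empty sub-dominion in
which no vertex has priority `h`. -/
theorem dominion_sub_dominion_without_top {V : Type*} [Finite V] (G : ParityGame V)
    (P : Player) (D : Set V) (h : ℕ) (hD : G.IsDominion P D) (hne : D.Nonempty)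
    (hocc : ∃ v ∈ D, G.priority v = h) (hmax : ∀ v ∈ D, G.priority v ≤ h)
    (hpar : ¬ P.matchesPriority h) :
    ∃ D', D' ⊆ D ∧ D'.Nonempty ∧ G.IsDominion P D' ∧ ∀ v ∈ D', G.priority v ≠ h := by
  classical
  obtain ⟨v₀, hv₀⟩ := hne
  obtain ⟨-, -, hopp, hwin⟩ := hD
  obtain ⟨σ, hσ, hσwin⟩ := hwin v₀ hv₀
  have hstepD : ∀ s t, s.2 ∈ D → G.HStep P σ s t → t.2 ∈ D := by
    rintro s t hs ⟨-, he, hP⟩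
    by_cases ho : G.owner s.2 = P
    · rw [hP ho]; exact (hσ _ _ hs ho).1
    · exact hopp _ hs ho _ trivial he
  have hcw : G.ContWins P D σ ([], v₀) := by
    intro π h0 hp hin hag
    exact hσwin π h0 hp hin fun i ho => by simpa using hag i ho
  have hreach := fun t => ParityGame.contWins_of_reachable (t := t) hstepD hcw hv₀
  obtain ⟨s₀, hs₀, hno⟩ : ∃ s, Relation.ReflTransGen (G.HStep P σ) ([], v₀) s ∧
      ∀ t, Relation.TransGen (G.HStep P σ) s t → G.priority t.2 ≠ h := by
    by_contra! hcon
    obtain ⟨π, h0, hplay, hag, hinf⟩ := ParityGame.exists_play_infOften hcon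
    have hin : ∀ i, π i ∈ D := by
      intro i
      induction i with
      | zero => rwa [h0]
      | succ i ih =>
        exact hstepD (_, π i) (_, π (i + 1)) ih ⟨rfl, hplay i, hag i⟩
    obtain ⟨p, hp, hle, hm⟩ := hσwin π h0 hplay hin hag
    obtain ⟨i, -, hi⟩ := hp 0
    have : p = h := le_antisymm (hi ▸ hmax _ (hin i)) (hle h hinf)
    exact hpar (this ▸ hm)
  have hTD : ∀ t, Relation.TransGen (G.HStep P σ) s₀ t → t.2 ∈ D ∧ G.ContWins P D σ t :=
    fun t ht => hreach t (hs₀.trans ht.to_reflTransGen)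
  have hPstep : ∀ l v, v ∈ D → G.owner v = P → G.HStep P σ (l, v) (l ++ [v], σ l v) :=
    fun l v hv ho => ⟨rfl, (hσ l v hv ho).2, fun _ => rfl⟩
  have hOstep : ∀ l v w, G.owner v ≠ P → G.edge v w → G.HStep P σ (l, v) (l ++ [v], w) :=
    fun l v w ho he => ⟨rfl, he, fun h => absurd h ho⟩
  let D' : Set V := {w | ∃ l, Relation.TransGen (G.HStep P σ) s₀ (l, w)}
  have hsub : D' ⊆ D := fun w ⟨l, hl⟩ => (hTD _ hl).1
  have hsucc : ∀ v ∈ D', G.owner v = P → ∃ w ∈ D', G.edge v w := by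
    rintro v ⟨l, hl⟩ ho
    have hst := hPstep l v (hTD _ hl).1 ho
    exact ⟨_, ⟨_, hl.tail hst⟩, hst.2.1⟩
  refine ⟨D', hsub, ?_, ⟨Set.subset_univ _, hsucc, ?_, ?_⟩, fun w ⟨l, hl⟩ => hno _ hl⟩
  · have hs₀D := (hreach s₀ hs₀).1
    by_cases ho : G.owner s₀.2 = P
    · exact ⟨_, _, .single (hPstep s₀.1 s₀.2 hs₀D ho)⟩
    · obtain ⟨w, hw⟩ := G.succ_nonempty s₀.2
      exact ⟨w, _, .single (hOstep s₀.1 s₀.2 w ho hw)⟩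
  · rintro v ⟨l, hl⟩ ho w - he
    exact ⟨_, hl.tail (hOstep l v w ho he)⟩
  · rintro v ⟨p, hp⟩
    choose! g hg using hsucc
    -- After histories that do not continue `p` in agreement with `σ`, the prescribed
    -- move matters only in that it stays in the sub-dominion.
    refine ⟨fun l w => if Relation.TransGen (G.HStep P σ) s₀ (p ++ l, w)
      then σ (p ++ l) w else g w, ?_, ?_⟩
    · intro l w hw ho
      dsimp only
      split_ifs with hc
      · have hst := hPstep (p ++ l) w (hsub hw) ho
        exact ⟨⟨_, hc.tail hst⟩, hst.2.1⟩
      · exact hg w hw ho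
    · intro π h0 hplay hin hag
      have hc : ∀ i, Relation.TransGen (G.HStep P σ) s₀
          (p ++ List.ofFn fun j : Fin i => π j, π i) := by
        intro i
        induction i with
        | zero => simpa [h0] using hp
        | succ i ih =>
          refine ih.tail ⟨?_, hplay i, fun ho => ?_⟩
          · simp only [List.ofFn_succ', List.concat_eq_append, List.append_assoc]
            simp
          · exact (hag i ho).trans (if_pos ih)
      refine (hTD _ hp).2 π h0 hplay (fun i => hsub (hin i)) fun i ho => ?_
      exact (hag i ho).trans (if_pos (hc i))
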